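/- Let m, n be positive integers, let 0 ≤ l ≤ n, and for each i = 1,…,m let ε_i ∈ {1, −1} and let w_{i,1},…,w_{i,n} be nonzero integers. Let n_l^+ be the number of indices i with ε_i = 1 and #{j : w_{i,j} < 0} = l, and n_l^− the number of indices i with ε_i = −1 and #{j : w_{i,j} < 0} = l. Suppose there is a real constant c such that for every real q with 0 < q < 1 one has ∑_{i=1}^m ε_i · σ_l(q^{w_{i,1}},…,q^{w_{i,n}}) / ∏_{j=1}^n (1 − q^{w_{i,j}}) = c. Then c = (−1)^l · (n_l^+ − n_l^−). -/

import Mathlib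

/-- The `l`-th elementary symmetric polynomial evaluated at `t 0, …, t (n-1)`. -/
def esymm {K : Type*} [CommRing K] {n : ℕ} (l : ℕ) (t : Fin n → K) : K :=
  ∑ S ∈ Finset.powersetCard l (Finset.univ : Finset (Fin n)), ∏ j ∈ S, t j

open Filter Topology in
lemma aux_pos (w : ℤ) (hw : 0 < w) :
    Tendsto (fun q : ℝ => q ^ w) (𝓝[>] 0) (𝓝 0) := by
  lift w to ℕ using hw.le
  have h : Tendsto (fun q : ℝ => q ^ w) (𝓝 0) (𝓝 ((0:ℝ) ^ w)) :=
    (continuous_pow w).tendsto 0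
  rw [zero_pow (by omega)] at h
  simpa using h.mono_left nhdsWithin_le_nhds

open Filter Topology in
lemma aux_factor (w : ℤ) (hw : w ≠ 0) (P : Prop) [Decidable P] :
    Tendsto (fun q : ℝ => (if P then q ^ w else 1) / (1 - q ^ w)) (𝓝[>] 0)
      (𝓝 (if P ↔ w < 0 then (if w < 0 then -1 else 1) else 0)) := by
  rcases lt_or_gt_of_ne hw with h | h
  · have h1 := aux_pos (-w) (by omega)
    have h2 : Tendsto (fun q : ℝ => (if P then 1 else q ^ (-w)) / (q ^ (-w) - 1)) (𝓝[>] 0)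
      (𝓝 ((if P then 1 else 0) / (0 - 1))) := by
      refine Tendsto.div ?_ (h1.sub tendsto_const_nhds) (by norm_num)
      split_ifs
      · exact tendsto_const_nhds
      · exact h1
    have e : (if P ↔ w < 0 then (if w < 0 then -1 else 1) else 0 : ℝ)
        = (if P then 1 else 0) / (0 - 1) := by
      by_cases hP : P <;> simp [hP, h]
    rw [e]
    refine h2.congr' ?_
    filter_upwards [self_mem_nhdsWithin] with q hq
    have hq : (0:ℝ) < q := hq
    have hz : q ^ w ≠ 0 := (zpow_pos hq w).ne'
    have : q ^ (-w) - 1 = (1 - q ^ w) / q ^ w := by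
      rw [zpow_neg]; field_simp
    rw [this, div_div_eq_mul_div]
    congr 1
    split_ifs
    · simp
    · rw [zpow_neg]; field_simp
  · have h1 := aux_pos w h
    have e : (if P ↔ w < 0 then (if w < 0 then -1 else 1) else 0 : ℝ)
        = (if P then 0 else 1) / (1 - 0) := by
      by_cases hP : P <;> simp [hP, h.le, not_lt.mpr h.le]
    rw [e]
    refine Tendsto.div ?_ (tendsto_const_nhds.sub h1) (by norm_num)
    split_ifs
    · exact h1
    · exact tendsto_const_nhds

open Filter Topology in
lemma aux_term {n : ℕ} (l : ℕ) (w : Fin n → ℤ) (hw : ∀ j, w j ≠ 0) :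
    Tendsto (fun q : ℝ => esymm l (fun j => q ^ (w j)) / ∏ j, (1 - q ^ (w j))) (𝓝[>] 0)
      (𝓝 (if (Finset.univ.filter fun j => w j < 0).card = l then (-1) ^ l else 0)) := by
  have key : Tendsto (fun q : ℝ => ∑ S ∈ Finset.powersetCard l (Finset.univ : Finset (Fin n)),
      ∏ j, (if j ∈ S then q ^ (w j) else 1) / (1 - q ^ (w j))) (𝓝[>] 0)
      (𝓝 (∑ S ∈ Finset.powersetCard l (Finset.univ : Finset (Fin n)),
        ∏ j, (if j ∈ S ↔ w j < 0 then (if w j < 0 then -1 else 1) else 0))) :=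
    tendsto_finsetSum _ fun S _ => tendsto_finsetProd _ fun j _ => aux_factor _ (hw j) _
  have e1 : ∀ S : Finset (Fin n),
      (∏ j, (if j ∈ S ↔ w j < 0 then (if w j < 0 then -1 else 1) else 0 : ℝ))
      = if S = (Finset.univ.filter fun j => w j < 0) then
        (-1) ^ (Finset.univ.filter fun j => w j < 0).card else 0 := by
    intro S
    split_ifs with h
    · subst h
      simp [Finset.prod_ite]
    · have : ∃ j, ¬ (j ∈ S ↔ w j < 0) := by
        by_contra! hh
        exact h (by ext j; simp [hh j])
      obtain ⟨j, hj⟩ := this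
      exact Finset.prod_eq_zero (Finset.mem_univ j) (if_neg hj)
  simp only [e1, Finset.sum_ite_eq', Finset.mem_powersetCard_univ] at key
  have e2 : (if (Finset.univ.filter fun j => w j < 0).card = l then (-1) ^ l else 0 : ℝ)
      = if (Finset.univ.filter fun j => w j < 0).card = l then
        (-1) ^ (Finset.univ.filter fun j => w j < 0).card else 0 := by
    split_ifs with h
    · rw [h]
    · rfl
  rw [e2]
  refine key.congr fun q => ?_
  rw [esymm, Finset.sum_div]
  refine Finset.sum_congr rfl fun S _ => ?_
  rw [Finset.prod_div_distrib]
  congr 1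
  simp [Finset.prod_ite]

/-- The formula `χ^l(M) = (-1)^l (n_l^+ - n_l^-)` from Section 4 of the paper, with
rigidity (constancy in `q` of the fixed-point sum) taken as a hypothesis. -/
theorem stmt_11 (m n : ℕ) (hm : 0 < m) (hn : 0 < n) (l : ℕ) (hl : l ≤ n)
    (ε : Fin m → ℝ) (hε : ∀ i, ε i = 1 ∨ ε i = -1)
    (w : Fin m → Fin n → ℤ) (hw : ∀ i j, w i j ≠ 0)
    (nplus nminus : ℕ)
    (hplus : nplus = (Finset.univ.filter fun i =>
      ε i = 1 ∧ (Finset.univ.filter fun j => w i j < 0).card = l).card)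
    (hminus : nminus = (Finset.univ.filter fun i =>
      ε i = -1 ∧ (Finset.univ.filter fun j => w i j < 0).card = l).card)
    (c : ℝ)
    (hc : ∀ q : ℝ, 0 < q → q < 1 →
      ∑ i, ε i * esymm l (fun j => q ^ (w i j)) / ∏ j, (1 - q ^ (w i j)) = c) :
    c = (-1) ^ l * ((nplus : ℝ) - (nminus : ℝ)) := by
  have h1 : Filter.Tendsto (fun q : ℝ => ∑ i, ε i * esymm l (fun j => q ^ (w i j)) / ∏ j, (1 - q ^ (w i j)))
      (nhdsWithin 0 (Set.Ioi 0)) (nhds (∑ i, ε i *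
        (if (Finset.univ.filter fun j => w i j < 0).card = l then (-1) ^ l else 0))) := by
    refine tendsto_finsetSum _ fun i _ => ?_
    simp only [mul_div_assoc]
    exact (aux_term l (w i) (hw i)).const_mul _
  have h2 : Filter.Tendsto (fun q : ℝ => ∑ i, ε i * esymm l (fun j => q ^ (w i j)) / ∏ j, (1 - q ^ (w i j)))
      (nhdsWithin 0 (Set.Ioi 0)) (nhds c) := by
    refine tendsto_const_nhds.congr' ?_
    filter_upwards [Ioo_mem_nhdsGT (show (0:ℝ) < 1 by norm_num)] with q hq
    exact (hc q hq.1 hq.2).symm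
  rw [tendsto_nhds_unique h2 h1, hplus, hminus, Finset.card_filter, Finset.card_filter]
  push_cast
  rw [← Finset.sum_sub_distrib, Finset.mul_sum]
  refine Finset.sum_congr rfl fun i _ => ?_
  rcases hε i with h | h <;> rw [h] <;> norm_num
  split_ifs <;> simp
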